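/- (Main theorem, conditional on bounded prime gaps) Fix an integer k ≥ 1 and suppose there exist infinitely many k-tuples of primes p_1 < p_2 < … < p_k with p_k ≤ p_1 + L for some constant L = L_k (Maynard's theorem). Then there exists a constant d_k > 0 such that for infinitely many squarefree integers n with exactly k prime factors, A(n) > d_k · n^{2^{k-1}/k - 1}, where A(n) is the largest absolute value of the coefficients of the n-th cyclotomic polynomial. -/

import Mathlib

/-- `A n` is the largest absolute value of the coefficients of the `n`-th cyclotomic polynomial. -/
noncomputable def A (n : ℕ) : ℕ :=
  (Polynomial.cyclotomic n ℤ).support.sup fun i => ((Polynomial.cyclotomic n ℤ).coeff i).natAbs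

open Polynomial Finset

/-- For a set `S` of primes, `Φ_{∏ S}` times the factors `X ^ d - 1` of Möbius sign `-1` equals the
product of the factors of Möbius sign `1`, evaluated at a point. -/
theorem cyclotomic_prod_primes_eval {R : Type*} [CommRing R] (S : Finset ℕ)
    (hS : ∀ p ∈ S, p.Prime) (z : R) :
    (cyclotomic (∏ p ∈ S, p) R).eval z *
        ∏ T ∈ S.powerset, (if Even (#T + #S) then 1 else z ^ (∏ p ∈ T, p) - 1) =
      ∏ T ∈ S.powerset, (if Even (#T + #S) then z ^ (∏ p ∈ T, p) - 1 else 1) := by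
  induction S using Finset.induction_on generalizing z with
  | empty => simp
  | insert q S hq ih =>
    have hqp : q.Prime := hS q (mem_insert_self q S)
    have hS' : ∀ p ∈ S, p.Prime := fun p hp => hS p (mem_insert_of_mem hp)
    have hdvd : ¬ q ∣ ∏ p ∈ S, p := by
      intro h
      obtain ⟨p, hp, hqp'⟩ := (Prime.dvd_finsetProd_iff hqp.prime _).1 h
      exact hq (((Nat.prime_dvd_prime_iff_eq hqp (hS' p hp)).1 hqp') ▸ hp)
    have hexp := congrArg (eval z) (cyclotomic_expand_eq_cyclotomic_mul hqp hdvd R)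
    rw [expand_eval, eval_mul] at hexp
    have h1 := ih hS' z
    have h2 := ih hS' (z ^ q)
    have hmem : ∀ T ∈ S.powerset, q ∉ T := fun T hT h => hq (mem_powerset.1 hT h)
    have e1 : ∏ T ∈ S.powerset,
        (if Even (#T + #(insert q S)) then 1 else z ^ (∏ p ∈ T, p) - 1) =
        ∏ T ∈ S.powerset, (if Even (#T + #S) then z ^ (∏ p ∈ T, p) - 1 else 1) := by
      refine prod_congr rfl fun T _ => ?_
      simp only [card_insert_of_notMem hq, ← add_assoc, Nat.even_add_one, ite_not]
    have e2 : ∏ T ∈ S.powerset,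
        (if Even (#T + #(insert q S)) then z ^ (∏ p ∈ T, p) - 1 else 1) =
        ∏ T ∈ S.powerset, (if Even (#T + #S) then 1 else z ^ (∏ p ∈ T, p) - 1) := by
      refine prod_congr rfl fun T _ => ?_
      simp only [card_insert_of_notMem hq, ← add_assoc, Nat.even_add_one, ite_not]
    have hpar : ∀ T ∈ S.powerset, (Even (#(insert q T) + #(insert q S)) ↔ Even (#T + #S)) := by
      intro T hT
      rw [card_insert_of_notMem hq, card_insert_of_notMem (hmem T hT)]
      grind
    have e3 : ∏ T ∈ S.powerset, (if Even (#(insert q T) + #(insert q S)) then 1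
          else z ^ (∏ p ∈ insert q T, p) - 1) =
        ∏ T ∈ S.powerset, (if Even (#T + #S) then 1 else (z ^ q) ^ (∏ p ∈ T, p) - 1) := by
      refine prod_congr rfl fun T hT => ?_
      simp only [hpar T hT, prod_insert (hmem T hT), pow_mul]
    have e4 : ∏ T ∈ S.powerset, (if Even (#(insert q T) + #(insert q S))
          then z ^ (∏ p ∈ insert q T, p) - 1 else 1) =
        ∏ T ∈ S.powerset, (if Even (#T + #S) then (z ^ q) ^ (∏ p ∈ T, p) - 1 else 1) := by
      refine prod_congr rfl fun T hT => ?_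
      simp only [hpar T hT, prod_insert (hmem T hT), pow_mul]
    rw [prod_powerset_insert hq, prod_powerset_insert hq, e1, e2, e3, e4, prod_insert hq,
      mul_comm q, ← h1, ← h2, hexp]
    ring

/-- A product over the subsets of a nonempty `S` in which every subset of one parity contributes at
most `ε` and the others contribute `1` is at most `ε ^ 2 ^ (#S - 1)`. -/
theorem prod_powerset_ite_even_le {S : Finset ℕ} (hS : S.Nonempty) (m : ℕ) {ε : ℝ}
    (g : Finset ℕ → ℝ) (hg0 : ∀ T ⊆ S, 0 ≤ g T) (hg : ∀ T ⊆ S, ¬ Even (#T + m) → g T ≤ ε) :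
    ∏ T ∈ S.powerset, (if Even (#T + m) then 1 else g T) ≤ ε ^ 2 ^ (#S - 1) := by
  obtain ⟨q, hq⟩ := hS
  obtain ⟨S, hqS, rfl⟩ : ∃ S', q ∉ S' ∧ S = insert q S' :=
    ⟨S.erase q, notMem_erase q S, (insert_erase hq).symm⟩
  rw [prod_powerset_insert hqS, ← prod_mul_distrib, card_insert_of_notMem hqS, Nat.add_sub_cancel,
    ← card_powerset, ← prod_const]
  have hsub : ∀ T ∈ S.powerset, T ⊆ insert q S ∧ insert q T ⊆ insert q S := fun T hT =>
    ⟨(mem_powerset.1 hT).trans (subset_insert q S), insert_subset_insert q (mem_powerset.1 hT)⟩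
  refine prod_le_prod (fun T hT => ?_) fun T hT => ?_
  · refine mul_nonneg ?_ ?_ <;> split_ifs
    exacts [zero_le_one, hg0 _ (hsub T hT).1, zero_le_one, hg0 _ (hsub T hT).2]
  · have hcard : #(insert q T) + m = #T + m + 1 := by
      rw [card_insert_of_notMem fun h => hqS (mem_powerset.1 hT h)]; ring
    by_cases h : Even (#T + m)
    · have h' : ¬ Even (#(insert q T) + m) := by
        rw [hcard, Nat.even_add_one]; exact not_not.2 h
      rw [if_pos h, if_neg h', one_mul]
      exact hg _ (hsub T hT).2 h'
    · have h' : Even (#(insert q T) + m) := by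
        rw [hcard, Nat.even_add_one]; exact h
      rw [if_neg h, if_pos h', mul_one]
      exact hg _ (hsub T hT).1 h

/-- If `z ^ q = -1` with `q` even, raising `z` to a product of odd numbers `p` amounts, up to the
sign `(-1) ^ #T`, to raising it to the product of the differences `p - q`. -/
theorem pow_prod_eq_neg_one_pow_mul_zpow {z : ℂ} {q : ℕ} (hz : z ^ q = -1) (hq : Even q)
    (T : Finset ℕ) (hT : ∀ p ∈ T, Odd p) :
    z ^ (∏ p ∈ T, p) = (-1) ^ #T * z ^ (∏ p ∈ T, ((p : ℤ) - q)) ∧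
      Odd (∏ p ∈ T, ((p : ℤ) - q)) := by
  have hz0 : z ≠ 0 := by
    rintro rfl
    rcases eq_or_ne q 0 with rfl | h
    · norm_num at hz
    · simp [h] at hz
  induction T using Finset.induction_on with
  | empty => simp
  | insert p T hp ih =>
    obtain ⟨ih1, ih2⟩ := ih fun r hr => hT r (mem_insert_of_mem hr)
    have hpo : Odd p := hT p (mem_insert_self p T)
    have hb : Odd ((p : ℤ) - q) :=
      ((Int.odd_coe_nat p).2 hpo).sub_even ((Int.even_coe_nat q).2 hq)
    refine ⟨?_, by rw [prod_insert hp]; exact hb.mul ih2⟩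
    have hzp : z ^ p = -z ^ ((p : ℤ) - q) := by
      rw [zpow_sub₀ hz0, zpow_natCast, zpow_natCast, hz]; ring
    rw [prod_insert hp, mul_comm p, pow_mul, prod_insert hp, card_insert_of_notMem hp, ih1, mul_pow,
      ← pow_mul, mul_comm (#T), pow_mul, hpo.neg_one_pow,
      ← zpow_natCast (z ^ _) p, ← zpow_mul, mul_comm (∏ p ∈ T, ((p : ℤ) - q)) (p : ℤ), zpow_mul,
      zpow_natCast z p, hzp, ih2.neg_zpow, ← zpow_mul]
    ring

/-- The norm of a cyclotomic polynomial on the unit circle is at most `2 n` times its height. -/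
theorem norm_eval_cyclotomic_le {n : ℕ} (hn : 0 < n) {z : ℂ} (hz : ‖z‖ = 1) :
    ‖(cyclotomic n ℂ).eval z‖ ≤ 2 * n * A n := by
  have hcoeff : ∀ i, ‖(cyclotomic n ℂ).coeff i‖ ≤ A n := by
    intro i
    rw [← map_cyclotomic_int n ℂ, coeff_map]
    have h : ((cyclotomic n ℤ).coeff i).natAbs ≤ A n := by
      by_cases hi : i ∈ (cyclotomic n ℤ).support
      · exact le_sup (f := fun i => ((cyclotomic n ℤ).coeff i).natAbs) hi
      · simp [notMem_support_iff.1 hi]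
    rw [eq_intCast, Complex.norm_intCast, ← Int.cast_abs, Int.abs_eq_natAbs]
    exact_mod_cast h
  rw [eval_eq_sum_range]
  calc ‖∑ i ∈ range ((cyclotomic n ℂ).natDegree + 1), (cyclotomic n ℂ).coeff i * z ^ i‖
      ≤ ∑ i ∈ range ((cyclotomic n ℂ).natDegree + 1), (A n : ℝ) := by
        refine norm_sum_le_of_le _ fun i _ => ?_
        rw [norm_mul, norm_pow, hz, one_pow, mul_one]
        exact hcoeff i
    _ = (n.totient + 1) * A n := by
        rw [sum_const, card_range, natDegree_cyclotomic, nsmul_eq_mul]; push_cast; ring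
    _ ≤ 2 * n * A n := by
        have h1 : (n.totient : ℝ) ≤ n := by exact_mod_cast n.totient_le
        have h2 : (1 : ℝ) ≤ n := by exact_mod_cast hn
        gcongr
        linarith

/-- Integer powers of a point `exp (i t)` of the unit circle stay close to `1`. -/
theorem norm_exp_zpow_sub_one_le (t : ℝ) (c : ℤ) :
    ‖Complex.exp (t * Complex.I) ^ c - 1‖ ≤ |(c : ℝ)| * |t| := by
  rw [← Complex.exp_int_mul, ← abs_mul, ← Real.norm_eq_abs]
  have := Real.norm_exp_I_mul_ofReal_sub_one_le (x := c * t)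
  convert this using 4
  push_cast
  ring

/-- The height of `Φ_n` for `n` a product of primes from an interval `[p, p + L]`. -/
theorem height_cyclotomic_prod_primes {S : Finset ℕ} {p L : ℕ} (hS : S.Nonempty)
    (hprime : ∀ r ∈ S, r.Prime) (hp2 : 2 < p) (hpo : Odd p) (hlow : ∀ r ∈ S, p ≤ r)
    (hup : ∀ r ∈ S, r ≤ p + L) (hlarge : 4 * (L + 1) ^ #S ≤ p) :
    1 ≤ 2 * ((∏ r ∈ S, r : ℕ) : ℝ) * A (∏ r ∈ S, r) *
      (4 * (L + 1) ^ #S / p : ℝ) ^ 2 ^ (#S - 1) := by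
  set q := p + 1 with hqdef
  set C : ℝ := (L + 1) ^ #S with hC
  have hp0 : (0 : ℝ) < p := by exact_mod_cast (by omega : 0 < p)
  have hq0 : (0 : ℝ) < q := by positivity
  have hqe : Even q := hpo.add_one
  have hodd : ∀ r ∈ S, Odd r := fun r hr =>
    (hprime r hr).odd_of_ne_two (by have := hlow r hr; omega)
  set z : ℂ := Complex.exp ((Real.pi / q : ℝ) * Complex.I) with hzdef
  have hzq : z ^ q = -1 := by
    rw [hzdef, ← Complex.exp_nat_mul, ← Complex.exp_pi_mul_I]
    congr 1
    have : (q : ℂ) ≠ 0 := by exact_mod_cast hq0.ne'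
    push_cast
    field_simp
  have hznorm : ‖z‖ = 1 := Complex.norm_exp_ofReal_mul_I _
  have hε1 : 4 * C / p ≤ 1 := by
    rw [div_le_one hp0, hC]
    exact_mod_cast hlarge
  have hclose : ∀ T ⊆ S, ‖z ^ (∏ r ∈ T, ((r : ℤ) - q)) - 1‖ ≤ 4 * C / p := by
    intro T hT
    refine (norm_exp_zpow_sub_one_le _ _).trans ?_
    have hc : |((∏ r ∈ T, ((r : ℤ) - q) : ℤ) : ℝ)| ≤ C := by
      push_cast
      rw [abs_prod]
      calc ∏ r ∈ T, |(r : ℝ) - q| ≤ ∏ r ∈ T, ((L : ℝ) + 1) := by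
            refine prod_le_prod (fun _ _ => abs_nonneg _) fun r hr => ?_
            have h1 : (p : ℝ) ≤ r := by exact_mod_cast hlow r (hT hr)
            have h2 : (r : ℝ) ≤ p + L := by exact_mod_cast hup r (hT hr)
            have h3 : (q : ℝ) = p + 1 := by rw [hqdef]; push_cast; rfl
            have h4 : (0 : ℝ) ≤ L := L.cast_nonneg
            rw [abs_le]
            constructor <;> linarith
        _ = ((L : ℝ) + 1) ^ #T := prod_const _
        _ ≤ C := pow_le_pow_right₀ (by linarith [(L.cast_nonneg : (0 : ℝ) ≤ L)]) (card_le_card hT)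
    have ht : |Real.pi / q| ≤ 4 / p := by
      rw [abs_of_pos (div_pos Real.pi_pos hq0)]
      exact div_le_div₀ (by norm_num) Real.pi_le_four hp0 (by rw [hqdef]; push_cast; linarith)
    calc _ ≤ C * (4 / p) := mul_le_mul hc ht (abs_nonneg _) (by positivity)
      _ = 4 * C / p := by ring
  -- The point of evaluation is `z` or `-z`, according to the parity of the number of primes.
  set w : ℂ := (-1) ^ (#S + 1) * z with hw
  have hwnorm : ‖w‖ = 1 := by simp [hw, hznorm]
  have hwpow : ∀ T ⊆ S, w ^ (∏ r ∈ T, r) =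
      (-1) ^ (#T + #S + 1) * z ^ (∏ r ∈ T, ((r : ℤ) - q)) := by
    intro T hT
    have hoT : ∀ r ∈ T, Odd r := fun r hr => hodd r (hT hr)
    have hpT : Odd (∏ r ∈ T, r) := by
      induction T using Finset.induction_on with
      | empty => simp
      | insert r T hr ih =>
        rw [prod_insert hr]
        exact (hoT r (mem_insert_self r T)).mul (ih ((subset_insert r T).trans hT)
          fun s hs => hoT s (mem_insert_of_mem hs))
    rw [hw, mul_pow, (pow_prod_eq_neg_one_pow_mul_zpow hzq hqe T hoT).1, ← pow_mul,
      mul_comm (#S + 1), pow_mul, hpT.neg_one_pow]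
    ring
  have hid := congrArg norm (cyclotomic_prod_primes_eval S hprime w)
  rw [norm_mul, norm_prod, norm_prod] at hid
  have hbad : ∏ T ∈ S.powerset, ‖if Even (#T + #S) then 1 else w ^ (∏ r ∈ T, r) - 1‖ ≤
      (4 * C / p) ^ 2 ^ (#S - 1) := by
    have := prod_powerset_ite_even_le hS (#S) (ε := 4 * C / p)
      (fun T => ‖w ^ (∏ r ∈ T, r) - 1‖) (fun _ _ => norm_nonneg _) (by
        intro T hT h
        rw [hwpow T hT, (Nat.even_add_one.2 h).neg_one_pow, one_mul]
        exact hclose T hT)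
    refine le_trans (le_of_eq (prod_congr rfl fun T _ => ?_)) this
    split_ifs <;> simp
  have hgood : 1 ≤ ∏ T ∈ S.powerset, ‖if Even (#T + #S) then w ^ (∏ r ∈ T, r) - 1 else 1‖ := by
    refine Finset.one_le_prod fun T hT => ?_
    split_ifs with h
    · rw [hwpow T (mem_powerset.1 hT), h.add_one.neg_one_pow]
      have h1 := (hclose T (mem_powerset.1 hT)).trans hε1
      set u := z ^ (∏ r ∈ T, ((r : ℤ) - q))
      have h2 : ‖(-2 : ℂ)‖ ≤ ‖-1 * u - 1‖ + ‖u - 1‖ := by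
        refine (norm_add_le _ _).trans' (le_of_eq ?_)
        congr 1
        ring
      have h3 : ‖(-2 : ℂ)‖ = 2 := by simp
      linarith
    · simp
  have hn : 0 < ∏ r ∈ S, r := prod_pos fun r hr => (hprime r hr).pos
  calc (1 : ℝ) ≤ _ := hgood
    _ = _ := hid.symm
    _ ≤ _ := mul_le_mul (norm_eval_cyclotomic_le hn hwnorm) hbad
        (prod_nonneg fun _ _ => norm_nonneg _) (by positivity)

theorem main_lower_bound (k : ℕ) (hk : 1 ≤ k)
    (hmaynard : ∃ L : ℕ, ∀ N : ℕ, ∃ p : ℕ → ℕ,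
      (∀ i, 1 ≤ i → i ≤ k → (p i).Prime) ∧
      (∀ i j, 1 ≤ i → i < j → j ≤ k → p i < p j) ∧
      N < p 1 ∧ p k ≤ p 1 + L) :
    ∃ d : ℝ, 0 < d ∧ ∀ N : ℕ, ∃ n : ℕ, N < n ∧ Squarefree n ∧
      n.primeFactors.card = k ∧
      (A n : ℝ) > d * (n : ℝ) ^ ((2 ^ (k - 1) : ℝ) / k - 1) := by
  obtain ⟨L, hL⟩ := hmaynard
  set C : ℝ := (L + 1) ^ k with hC
  have hC0 : 0 < C := by positivity
  refine ⟨1 / (4 * (8 * C) ^ 2 ^ (k - 1)), by positivity, fun N => ?_⟩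
  obtain ⟨p, hprime, hmono, hN, hgap⟩ := hL (N + 2 + L + 4 * (L + 1) ^ k)
  have hinj : Set.InjOn p (Icc 1 k : Finset ℕ) := by
    intro i hi j hj hij
    simp only [coe_Icc, Set.mem_Icc] at hi hj
    rcases lt_trichotomy i j with h | h | h
    · exact absurd hij (hmono i j hi.1 h hj.2).ne
    · exact h
    · exact absurd hij (hmono j i hj.1 h hi.2).ne'
  set S := (Icc 1 k).image p with hSdef
  have hcard : #S = k := by rw [hSdef, card_image_of_injOn hinj, Nat.card_Icc]; omega
  have hSprime : ∀ r ∈ S, r.Prime := by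
    simp only [hSdef, mem_image, mem_Icc]
    rintro _ ⟨i, hi, rfl⟩
    exact hprime i hi.1 hi.2
  have hlow : ∀ r ∈ S, p 1 ≤ r := by
    simp only [hSdef, mem_image, mem_Icc]
    rintro _ ⟨i, hi, rfl⟩
    rcases hi.1.eq_or_lt with rfl | h
    · exact le_rfl
    · exact (hmono 1 i le_rfl h hi.2).le
  have hup : ∀ r ∈ S, r ≤ p 1 + L := by
    simp only [hSdef, mem_image, mem_Icc]
    rintro _ ⟨i, hi, rfl⟩
    refine le_trans ?_ hgap
    rcases hi.2.eq_or_lt with rfl | h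
    · exact le_rfl
    · exact (hmono i k hi.1 h le_rfl).le
  have h1S : p 1 ∈ S := mem_image_of_mem p (mem_Icc.2 ⟨le_rfl, hk⟩)
  have hheight := height_cyclotomic_prod_primes ⟨_, h1S⟩ hSprime (by omega)
    ((hprime 1 le_rfl hk).odd_of_ne_two (by omega)) hlow hup (by rw [hcard]; omega)
  rw [hcard, ← hC] at hheight
  set n := ∏ r ∈ S, r with hn
  have hn0 : 0 < n := prod_pos fun r hr => (hSprime r hr).pos
  have hpf : n.primeFactors = S := Nat.primeFactors_prod hSprime
  refine ⟨n, ?_, ?_, by rw [hpf, hcard], ?_⟩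
  · have := Nat.le_of_dvd hn0 (dvd_prod_of_mem (fun r => r) h1S)
    omega
  · rw [hn]
    refine squarefree_prod_of_pairwise_isCoprime ?_ ?_
    · intro a ha b hb hab
      exact Nat.coprime_iff_isRelPrime.1
        ((Nat.coprime_primes (hSprime a ha) (hSprime b hb)).2 hab)
    · exact fun r hr => (hSprime r hr).prime.squarefree
  · have hnR : (0 : ℝ) < n := by exact_mod_cast hn0
    have hp0 : (0 : ℝ) < p 1 := by exact_mod_cast (by omega : 0 < p 1)
    have hn_le : (n : ℝ) ≤ (2 * p 1) ^ k := by
      have h : n ≤ (2 * p 1) ^ k := by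
        rw [hn, ← hcard]
        exact prod_le_pow_card _ _ _ fun r hr => (hup r hr).trans (by omega)
      exact_mod_cast h
    have hpow : (n : ℝ) ^ ((2 ^ (k - 1) : ℝ) / k) ≤ (2 * p 1) ^ 2 ^ (k - 1) := by
      have hk0 : (k : ℝ) ≠ 0 := by exact_mod_cast (by omega : k ≠ 0)
      calc (n : ℝ) ^ ((2 ^ (k - 1) : ℝ) / k)
          ≤ ((2 * p 1 : ℝ) ^ k) ^ ((2 ^ (k - 1) : ℝ) / k) :=
            Real.rpow_le_rpow hnR.le hn_le (by positivity)
        _ = (2 * p 1) ^ 2 ^ (k - 1) := by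
            rw [← Real.rpow_natCast, ← Real.rpow_mul (by positivity), mul_div_cancel₀ _ hk0]
            exact_mod_cast Real.rpow_natCast (2 * p 1 : ℝ) (2 ^ (k - 1))
    rw [gt_iff_lt, Real.rpow_sub_one hnR.ne', div_mul_div_comm, one_mul,
      div_lt_iff₀ (by positivity)]
    have hsplit : (4 * C / p 1) ^ 2 ^ (k - 1) * (2 * p 1 : ℝ) ^ 2 ^ (k - 1) =
        (8 * C) ^ 2 ^ (k - 1) := by
      rw [← mul_pow]
      congr 1
      field_simp
      norm_num
    have hP : (0 : ℝ) < (2 * p 1) ^ 2 ^ (k - 1) := by positivity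
    have hfin : (2 * p 1 : ℝ) ^ 2 ^ (k - 1) ≤ 2 * n * A n * (8 * C) ^ 2 ^ (k - 1) := by
      rw [← hsplit, ← mul_assoc]
      exact le_mul_of_one_le_left hP.le hheight
    linarith
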